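/- arXiv:2010.15575 — 5 statements merged into one kernel-verified Lean document; each statement's English description precedes it below -/
import Mathlib

section
/- Fix u₀ ∈ ℂ, u₀ ≠ 0, and integers (m,n) ≠ (0,0); set κ = m + nτ and κ̄ = m + nτ̄. Suppose ζ⁺, ζ⁻ ∈ ℂ are both nonzero and satisfy ζ⁺ − ζ⁻ = πκ̄/τ₂ and ζ⁺ ζ⁻ = (κ̄/κ) u₀. Then a(ζ⁺) = a(ζ⁻) and b(ζ⁺) = b(ζ⁻), where a(ζ) = exp(ζ + u₀ζ⁻¹) and b(ζ) = exp(τζ + τ̄ u₀ ζ⁻¹). In other words, the pair (ζ⁺, ζ⁻) is mapped to a double point of the Fermi curve of the constant potential u₀. -/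
open Complex

/-- if `ζ⁺, ζ⁻` are nonzero and satisfy the double-point equations
`ζ⁺ − ζ⁻ = π κ̄ / τ₂` and `ζ⁺ ζ⁻ = (κ̄/κ) u₀` (with `κ = m + nτ`, `κ̄ = m + nτ̄`,
`(m,n) ≠ (0,0)`), then the Bloch multipliers agree: `a(ζ⁺) = a(ζ⁻)` and
`b(ζ⁺) = b(ζ⁻)`, i.e. `(ζ⁺, ζ⁻)` maps to a double point of the Fermi curve of
the constant potential `u₀`. -/
theorem double_point_of_fermi_curve (τ : ℂ) (hτ : 0 < τ.im)
    (u₀ : ℂ) (hu₀ : u₀ ≠ 0) (m n : ℤ) (hmn : (m, n) ≠ (0, 0))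
    (κ κb : ℂ) (hκ : κ = (m : ℂ) + (n : ℂ) * τ)
    (hκb : κb = (m : ℂ) + (n : ℂ) * ((τ.re : ℂ) - (τ.im : ℂ) * I))
    (ζp ζm : ℂ) (hζp : ζp ≠ 0) (hζm : ζm ≠ 0)
    (hdiff : ζp - ζm = (Real.pi : ℂ) * κb / (τ.im : ℂ))
    (hprod : ζp * ζm = (κb / κ) * u₀) :
    Complex.exp (ζp + u₀ * ζp⁻¹) = Complex.exp (ζm + u₀ * ζm⁻¹) ∧
    Complex.exp (τ * ζp + ((τ.re : ℂ) - (τ.im : ℂ) * I) * u₀ * ζp⁻¹)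
      = Complex.exp (τ * ζm + ((τ.re : ℂ) - (τ.im : ℂ) * I) * u₀ * ζm⁻¹) := by
  have hne : ζp * ζm ≠ 0 := mul_ne_zero hζp hζm
  have hκ0 : κ ≠ 0 := by
    rintro h
    rw [hprod, h] at hne
    simp at hne
  have hκb0 : κb ≠ 0 := by
    rintro h
    rw [hprod, h] at hne
    simp at hne
  have ht : (τ.im : ℂ) ≠ 0 := by exact_mod_cast hτ.ne'
  have hτe : τ = (τ.re : ℂ) + (τ.im : ℂ) * I := (Complex.re_add_im τ).symm
  have hu : u₀ = ζp * ζm * κ / κb := by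
    rw [hprod]
    field_simp
  have hp : ζp = ζm + (Real.pi : ℂ) * κb / (τ.im : ℂ) := by
    rw [← hdiff]; ring
  have hinv : u₀ * ζp⁻¹ = u₀ * ζm⁻¹ - (Real.pi : ℂ) * κ / (τ.im : ℂ) := by
    have h1 : u₀ * ζp⁻¹ = ζm * κ / κb := by
      rw [hu]; field_simp
    have h2 : u₀ * ζm⁻¹ = ζp * κ / κb := by
      rw [hu]; field_simp
    rw [h1, h2, hp]
    field_simp
    ring
  constructor
  · rw [Complex.exp_eq_exp_iff_exists_int]
    refine ⟨-n, ?_⟩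
    have hd : (Real.pi : ℂ) * κb / (τ.im : ℂ) - (Real.pi : ℂ) * κ / (τ.im : ℂ)
        = -(n : ℂ) * (2 * Real.pi * I) := by
      rw [div_sub_div_same, div_eq_iff ht, hκ, hκb]
      linear_combination (-(Real.pi : ℂ) * n) * hτe
    push_cast
    linear_combination hp + hinv + hd
  · rw [Complex.exp_eq_exp_iff_exists_int]
    refine ⟨m, ?_⟩
    have hd : τ * ((Real.pi : ℂ) * κb / (τ.im : ℂ))
        - ((τ.re : ℂ) - (τ.im : ℂ) * I) * ((Real.pi : ℂ) * κ / (τ.im : ℂ))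
        = (m : ℂ) * (2 * Real.pi * I) := by
      rw [← mul_div_assoc, ← mul_div_assoc, div_sub_div_same, div_eq_iff ht, hκ, hκb]
      linear_combination ((Real.pi : ℂ) * m) * hτe
    linear_combination τ * hp + ((τ.re : ℂ) - (τ.im : ℂ) * I) * hinv + hd
end

section
/- Higher-spin current: let N ≥ 1, let x : ℂ × ℂ → ℂ^N, u : ℂ × ℂ → ℂ, and v : ℂ × ℂ → ℂ be smooth with ∂_z∂_w xᵢ = u·xᵢ for each component, ∑ᵢ xᵢ² = 1 identically, ∑ᵢ (∂_z xᵢ)² = T₁ a constant, and ∂_w v = ∂_z u. Then the spin-4 current ∑ᵢ (∂_z² xᵢ)² + 2 T₁ v is independent of w, i.e. ∂_w ( ∑ᵢ (∂_z² xᵢ)² + 2 T₁ v ) = 0 identically. -/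
/-- Partial derivative with respect to the first (holomorphic) variable `z`. -/
noncomputable def pz (f : ℂ × ℂ → ℂ) : ℂ × ℂ → ℂ :=
  fun p => deriv (fun s => f (s, p.2)) p.1

/-- Partial derivative with respect to the second variable `w` (complexified `z̄`). -/
noncomputable def pw (f : ℂ × ℂ → ℂ) : ℂ × ℂ → ℂ :=
  fun p => deriv (fun s => f (p.1, s)) p.2

theorem pz_eq {f : ℂ × ℂ → ℂ} (hf : Differentiable ℂ f) (p : ℂ × ℂ) :
    HasDerivAt (fun s => f (s, p.2)) (fderiv ℂ f p (1, 0)) p.1 := by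
  have h1 : HasDerivAt (fun s : ℂ => (s, p.2)) ((1 : ℂ), (0 : ℂ)) p.1 :=
    (hasDerivAt_id p.1).prodMk (hasDerivAt_const p.1 p.2)
  exact HasFDerivAt.comp_hasDerivAt p.1 (hf (p.1, p.2)).hasFDerivAt h1

theorem pw_eq {f : ℂ × ℂ → ℂ} (hf : Differentiable ℂ f) (p : ℂ × ℂ) :
    HasDerivAt (fun s => f (p.1, s)) (fderiv ℂ f p (0, 1)) p.2 := by
  have h1 : HasDerivAt (fun s : ℂ => (p.1, s)) ((0 : ℂ), (1 : ℂ)) p.2 :=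
    (hasDerivAt_const p.2 p.1).prodMk (hasDerivAt_id p.2)
  exact HasFDerivAt.comp_hasDerivAt p.2 (hf (p.1, p.2)).hasFDerivAt h1

theorem pz_fun {f : ℂ × ℂ → ℂ} (hf : Differentiable ℂ f) :
    pz f = fun p => fderiv ℂ f p (1, 0) := funext fun p => (pz_eq hf p).deriv

theorem pw_fun {f : ℂ × ℂ → ℂ} (hf : Differentiable ℂ f) :
    pw f = fun p => fderiv ℂ f p (0, 1) := funext fun p => (pw_eq hf p).deriv

theorem cd_diff {f : ℂ × ℂ → ℂ} (hf : ContDiff ℂ ⊤ f) : Differentiable ℂ f :=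
  hf.differentiable (by simp)

theorem cd_fderiv {f : ℂ × ℂ → ℂ} (hf : ContDiff ℂ ⊤ f) : ContDiff ℂ ⊤ (fderiv ℂ f) :=
  hf.fderiv_right (by simp)

theorem cd_pz {f : ℂ × ℂ → ℂ} (hf : ContDiff ℂ ⊤ f) : ContDiff ℂ ⊤ (pz f) := by
  rw [pz_fun (cd_diff hf)]
  exact (cd_fderiv hf).clm_apply contDiff_const

theorem cd_pw {f : ℂ × ℂ → ℂ} (hf : ContDiff ℂ ⊤ f) : ContDiff ℂ ⊤ (pw f) := by
  rw [pw_fun (cd_diff hf)]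
  exact (cd_fderiv hf).clm_apply contDiff_const

theorem hz {f : ℂ × ℂ → ℂ} (hf : ContDiff ℂ ⊤ f) (p : ℂ × ℂ) :
    HasDerivAt (fun s => f (s, p.2)) (pz f p) p.1 :=
  (pz_eq (cd_diff hf) p).differentiableAt.hasDerivAt

theorem hw {f : ℂ × ℂ → ℂ} (hf : ContDiff ℂ ⊤ f) (p : ℂ × ℂ) :
    HasDerivAt (fun s => f (p.1, s)) (pw f p) p.2 :=
  (pw_eq (cd_diff hf) p).differentiableAt.hasDerivAt

theorem pz_pw_comm {f : ℂ × ℂ → ℂ} (hf : ContDiff ℂ ⊤ f) (p : ℂ × ℂ) :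
    pw (pz f) p = pz (pw f) p := by
  rw [pw_fun (cd_diff (cd_pz hf)), pz_fun (cd_diff (cd_pw hf)),
    pz_fun (cd_diff hf), pw_fun (cd_diff hf)]
  have hd : DifferentiableAt ℂ (fderiv ℂ f) p :=
    (cd_fderiv hf).differentiable (by simp) p
  have hs : IsSymmSndFDerivAt ℂ f p := hf.contDiffAt.isSymmSndFDerivAt (by simp)
  have key : ∀ a b : ℂ × ℂ, fderiv ℂ (fun q => fderiv ℂ f q a) p b
      = fderiv ℂ (fderiv ℂ f) p b a := by
    intro a b
    rw [fderiv_clm_apply hd (differentiableAt_const a)]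
    simp
  simp only [key]
  exact hs _ _

/-- the higher-spin current.  If each component of `x` solves
`∂_z∂_w xᵢ = u xᵢ`, `∑ᵢ xᵢ² = 1` identically, `∑ᵢ (∂_z xᵢ)² = T₁` is constant,
and `∂_w v = ∂_z u`, then the spin-4 current `∑ᵢ (∂_z² xᵢ)² + 2 T₁ v` is
independent of `w`. -/
theorem higher_spin_current (N : ℕ) (hN : 1 ≤ N)
    (x : Fin N → ℂ × ℂ → ℂ) (u v : ℂ × ℂ → ℂ) (T₁ : ℂ)
    (hx : ∀ i, ContDiff ℂ ⊤ (x i)) (hu : ContDiff ℂ ⊤ u) (hv : ContDiff ℂ ⊤ v)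
    (hxsymm : ∀ i p, pz (pw (x i)) p = pw (pz (x i)) p)
    (heq : ∀ i p, pz (pw (x i)) p = u p * x i p)
    (hconstraint : ∀ p, ∑ i, (x i p) ^ 2 = 1)
    (hT₁ : ∀ p, ∑ i, (pz (x i) p) ^ 2 = T₁)
    (hveq : ∀ p, pw v p = pz u p) :
    ∀ p, pw (fun q => (∑ i, (pz (pz (x i)) q) ^ 2) + 2 * T₁ * v q) p = 0 := by
  intro p
  have hz1 : ∀ i, ContDiff ℂ ⊤ (pz (x i)) := fun i => cd_pz (hx i)
  have hz2 : ∀ i, ContDiff ℂ ⊤ (pz (pz (x i))) := fun i => cd_pz (hz1 i)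
  have A : ∀ q, ∑ i, x i q * pz (x i) q = 0 := by
    intro q
    have h := HasDerivAt.fun_sum (u := Finset.univ) fun i _ => (hz (hx i) q).fun_pow 2
    simp only [hconstraint] at h
    have h0 := h.unique (hasDerivAt_const q.1 (1 : ℂ))
    have h2 : 2 * ∑ i, x i q * pz (x i) q = 0 := by
      rw [← h0, Finset.mul_sum]
      refine Finset.sum_congr rfl fun i _ => ?_
      push_cast
      ring
    simpa using h2
  have B : ∑ i, pz (x i) p * pz (pz (x i)) p = 0 := by
    have h := HasDerivAt.fun_sum (u := Finset.univ) fun i _ => (hz (hz1 i) p).fun_pow 2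
    simp only [hT₁] at h
    have h0 := h.unique (hasDerivAt_const p.1 T₁)
    have h2 : 2 * ∑ i, pz (x i) p * pz (pz (x i)) p = 0 := by
      rw [← h0, Finset.mul_sum]
      refine Finset.sum_congr rfl fun i _ => ?_
      push_cast
      ring
    simpa using h2
  have C : ∑ i, x i p * pz (pz (x i)) p = -T₁ := by
    have h := HasDerivAt.fun_sum (u := Finset.univ) fun i _ =>
      (hz (hx i) p).fun_mul (hz (hz1 i) p)
    simp only [A] at h
    have h0 := h.unique (hasDerivAt_const p.1 (0 : ℂ))
    rw [Finset.sum_add_distrib] at h0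
    have h1 := hT₁ p
    simp only [pow_two] at h1
    simp only [Prod.mk.eta] at h0
    linear_combination h0 - h1
  have D : ∀ i, pw (pz (pz (x i))) p = pz u p * x i p + u p * pz (x i) p := by
    intro i
    rw [pz_pw_comm (hz1 i)]
    have e : pw (pz (x i)) = fun q => u q * x i q :=
      funext fun q => by rw [← hxsymm, heq]
    rw [e]
    exact ((hz hu p).fun_mul (hz (hx i) p)).deriv
  have h := (HasDerivAt.fun_sum (u := Finset.univ) fun i _ => (hw (hz2 i) p).fun_pow 2).fun_add
    ((hw hv p).const_mul (2 * T₁))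
  refine h.deriv.trans ?_
  simp only [D, hveq, Prod.mk.eta]
  have E : ∑ i, ((2 : ℕ) : ℂ) * pz (pz (x i)) p ^ (2 - 1) * (pz u p * x i p + u p * pz (x i) p)
      = 2 * pz u p * (∑ i, x i p * pz (pz (x i)) p)
        + 2 * u p * ∑ i, pz (x i) p * pz (pz (x i)) p := by
    rw [Finset.mul_sum, Finset.mul_sum, ← Finset.sum_add_distrib]
    refine Finset.sum_congr rfl fun i _ => ?_
    push_cast
    ring
  rw [E, B, C]
  ring
end

section
/- Winding ansatz reduction of the O(N) model to the generalized Neumann system: let τ ∈ ℂ with τ₁ = Re τ, τ₂ = Im τ, τ̄ = τ₁ − iτ₂; let θ ∈ ℂ^N, let f, f^σ : ℝ → ℂ^N be twice continuously differentiable and u : ℝ → ℂ, and suppose the generalized Neumann equations hold: f̈ᵢ = (ττ̄θᵢ² − u)fᵢ + 2iτ₁θᵢḟᵢ and f̈^σᵢ = (ττ̄θᵢ² − u)f^σᵢ − 2iτ₁θᵢḟ^σᵢ (dots denote d/dy). Then the winding-ansatz fields ψᵢ(x,y) = e^{iθᵢ x} fᵢ(y) and ψ^σᵢ(x,y) = f^σᵢ(y)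 e^{−iθᵢ x} satisfy the second-order equations (τ̄∂_x − ∂_y)(τ∂_x − ∂_y)ψᵢ = −u·ψᵢ and (τ̄∂_x − ∂_y)(τ∂_x − ∂_y)ψ^σᵢ = −u·ψ^σᵢ for all (x,y) ∈ ℝ². -/
open Complex

/-- Partial derivative in the first real coordinate `x` of a function on `ℝ²`. -/
noncomputable def px (f : ℝ × ℝ → ℂ) : ℝ × ℝ → ℂ :=
  fun p => deriv (fun s => f (s, p.2)) p.1

/-- Partial derivative in the second real coordinate `y` of a function on `ℝ²`. -/
noncomputable def py (f : ℝ × ℝ → ℂ) : ℝ × ℝ → ℂ :=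
  fun p => deriv (fun s => f (p.1, s)) p.2

/-- The first-order operator `c ∂_x − ∂_y`. -/
noncomputable def Lop (c : ℂ) (f : ℝ × ℝ → ℂ) : ℝ × ℝ → ℂ :=
  fun p => c * px f p - py f p

theorem Lop_exp_mul (c a : ℂ) (g : ℝ → ℂ) (hg : Differentiable ℝ g) :
    Lop c (fun q => Complex.exp (a * (q.1 : ℂ)) * g q.2)
      = fun q => Complex.exp (a * (q.1 : ℂ)) * (c * a * g q.2 - deriv g q.2) := by
  funext q
  have h1 : HasDerivAt (fun s : ℝ => Complex.exp (a * (s : ℂ)) * g q.2)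
      (Complex.exp (a * (q.1 : ℂ)) * (a * 1) * g q.2) q.1 :=
    (((Complex.ofRealCLM.hasDerivAt (x := q.1)).const_mul a).cexp).mul_const _
  have h2 : HasDerivAt (fun s : ℝ => Complex.exp (a * (q.1 : ℂ)) * g s)
      (Complex.exp (a * (q.1 : ℂ)) * deriv g q.2) q.2 :=
    (hg q.2).hasDerivAt.const_mul _
  simp only [Lop, px, py]
  rw [h1.deriv, h2.deriv]
  ring

theorem Lop_Lop_exp_mul (c d a : ℂ) (g : ℝ → ℂ) (hg : ContDiff ℝ 2 g) (p : ℝ × ℝ) :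
    Lop d (Lop c (fun q => Complex.exp (a * (q.1 : ℂ)) * g q.2)) p
      = Complex.exp (a * (p.1 : ℂ)) *
        (d * c * a ^ 2 * g p.2 - (c + d) * a * deriv g p.2 + deriv (deriv g) p.2) := by
  have h1 : Differentiable ℝ g := hg.differentiable (by norm_num)
  have h2 : Differentiable ℝ (deriv g) :=
    ((contDiff_succ_iff_deriv (n := 1)).1 (by simpa [one_add_one_eq_two] using hg)).2.2.differentiable
      (by norm_num)
  rw [Lop_exp_mul c a g h1,
    Lop_exp_mul d a (fun y => c * a * g y - deriv g y) ((h1.const_mul _).sub h2)]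
  have h3 : HasDerivAt (fun y => c * a * g y - deriv g y)
      (c * a * deriv g p.2 - deriv (deriv g) p.2) p.2 :=
    ((h1 p.2).hasDerivAt.const_mul _).sub (h2 p.2).hasDerivAt
  simp only [h3.deriv]
  ring

/-- winding ansatz reduction of the `O(N)` model to the generalized
Neumann system.  If `f, f^σ` solve the generalized Neumann equations, then the
winding-ansatz fields `ψᵢ(x,y) = e^{iθᵢx} fᵢ(y)` and `ψ^σᵢ(x,y) = f^σᵢ(y) e^{−iθᵢx}`
satisfy `(τ̄∂_x − ∂_y)(τ∂_x − ∂_y)ψᵢ = −u ψᵢ` and the same equation for `ψ^σᵢ`. -/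
theorem winding_ansatz_neumann (N : ℕ) (τ : ℂ) (θ : Fin N → ℂ)
    (f fσ : Fin N → ℝ → ℂ) (u : ℝ → ℂ)
    (hf : ∀ i, ContDiff ℝ 2 (f i)) (hfσ : ∀ i, ContDiff ℝ 2 (fσ i))
    (heqf : ∀ i y, deriv (deriv (f i)) y
      = (τ * ((τ.re : ℂ) - (τ.im : ℂ) * I) * (θ i) ^ 2 - u y) * f i y
        + 2 * I * (τ.re : ℂ) * θ i * deriv (f i) y)
    (heqfσ : ∀ i y, deriv (deriv (fσ i)) y
      = (τ * ((τ.re : ℂ) - (τ.im : ℂ) * I) * (θ i) ^ 2 - u y) * fσ i y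
        - 2 * I * (τ.re : ℂ) * θ i * deriv (fσ i) y) :
    ∀ i (p : ℝ × ℝ),
      Lop ((τ.re : ℂ) - (τ.im : ℂ) * I)
          (Lop τ (fun q => Complex.exp (I * θ i * (q.1 : ℂ)) * f i q.2)) p
        = -(u p.2) * (Complex.exp (I * θ i * (p.1 : ℂ)) * f i p.2) ∧
      Lop ((τ.re : ℂ) - (τ.im : ℂ) * I)
          (Lop τ (fun q => fσ i q.2 * Complex.exp (-(I * θ i * (q.1 : ℂ))))) p
        = -(u p.2) * (fσ i p.2 * Complex.exp (-(I * θ i * (p.1 : ℂ)))) := by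
  have hτ : τ + ((τ.re : ℂ) - (τ.im : ℂ) * I) = 2 * (τ.re : ℂ) := by
    nth_rewrite 1 [← Complex.re_add_im τ]
    ring
  intro i p
  constructor
  · rw [Lop_Lop_exp_mul _ _ _ _ (hf i), hτ, heqf, mul_pow, I_sq]
    ring
  · have hfun : (fun q : ℝ × ℝ => fσ i q.2 * Complex.exp (-(I * θ i * (q.1 : ℂ))))
        = fun q => Complex.exp (-(I * θ i) * (q.1 : ℂ)) * fσ i q.2 := by
      funext q
      rw [mul_comm, neg_mul]
    rw [hfun, Lop_Lop_exp_mul _ _ _ _ (hfσ i), hτ, heqfσ, neg_sq, mul_pow, I_sq, neg_mul (I * θ i)]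
    ring
end

section
/- Winding ansatz identification of the self-consistent potential: let τ ∈ ℂ with τ₁ = Re τ, τ₂ = Im τ ≠ 0, τ̄ = τ₁ − iτ₂; let θ ∈ ℂ^N and let f, f^σ : ℝ → ℂ^N be continuously differentiable. Define ψᵢ(x,y) = e^{iθᵢ x} fᵢ(y), ψ^σᵢ(x,y) = f^σᵢ(y) e^{−iθᵢ x}, and the Wirtinger-type operators ∂_z = (τ̄∂_x − ∂_y)/(τ̄ − τ), ∂_w = (τ∂_x − ∂_y)/(τ − τ̄). Then for every (x,y) the identity −½ ∑ᵢ ( ∂_zψ^σᵢ · ∂_wψᵢ + ∂_wψ^σᵢ · ∂_zψᵢ ) = −u(y)/(4τ₂²) holds, where u(y) = iτ₁ ∑ᵢ θᵢ ( f^σᵢ ḟᵢ − ḟ^σᵢ fᵢ ) + ττ̄ ∑ᵢ θᵢ² f^σᵢ fᵢ + ∑ᵢ ḟ^σᵢ ḟᵢ. -/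
open Complex

/-- The Wirtinger-type operator `∂_z = (τ̄∂_x − ∂_y)/(τ̄ − τ)`. -/
noncomputable def Dz (τ τb : ℂ) (f : ℝ × ℝ → ℂ) : ℝ × ℝ → ℂ :=
  fun p => (τb * px f p - py f p) / (τb - τ)

/-- The Wirtinger-type operator `∂_w = (τ∂_x − ∂_y)/(τ − τ̄)`. -/
noncomputable def Dw (τ τb : ℂ) (f : ℝ × ℝ → ℂ) : ℝ × ℝ → ℂ :=
  fun p => (τ * px f p - py f p) / (τ - τb)

/-- winding ansatz identification of the self-consistent potential:
for the fields `ψᵢ(x,y) = e^{iθᵢx} fᵢ(y)`, `ψ^σᵢ(x,y) = f^σᵢ(y)e^{−iθᵢx}` one has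
`−½ ∑ᵢ (∂_zψ^σᵢ ∂_wψᵢ + ∂_wψ^σᵢ ∂_zψᵢ) = −u(y)/(4τ₂²)`, where
`u(y) = iτ₁ ∑ᵢ θᵢ(f^σᵢ ḟᵢ − ḟ^σᵢ fᵢ) + ττ̄ ∑ᵢ θᵢ² f^σᵢ fᵢ + ∑ᵢ ḟ^σᵢ ḟᵢ`. -/
theorem winding_ansatz_potential (N : ℕ) (τ : ℂ) (hτ : τ.im ≠ 0)
    (θ : Fin N → ℂ) (f fσ : Fin N → ℝ → ℂ)
    (hf : ∀ i, ContDiff ℝ 1 (f i)) (hfσ : ∀ i, ContDiff ℝ 1 (fσ i)) :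
    ∀ p : ℝ × ℝ,
      -(1/2) * ∑ i,
        (Dz τ ((τ.re : ℂ) - (τ.im : ℂ) * I)
            (fun q => fσ i q.2 * Complex.exp (-(I * θ i * (q.1 : ℂ)))) p
          * Dw τ ((τ.re : ℂ) - (τ.im : ℂ) * I)
            (fun q => Complex.exp (I * θ i * (q.1 : ℂ)) * f i q.2) p
        + Dw τ ((τ.re : ℂ) - (τ.im : ℂ) * I)
            (fun q => fσ i q.2 * Complex.exp (-(I * θ i * (q.1 : ℂ)))) p
          * Dz τ ((τ.re : ℂ) - (τ.im : ℂ) * I)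
            (fun q => Complex.exp (I * θ i * (q.1 : ℂ)) * f i q.2) p)
      = -(I * (τ.re : ℂ) * (∑ i, θ i * (fσ i p.2 * deriv (f i) p.2
              - deriv (fσ i) p.2 * f i p.2))
          + τ * ((τ.re : ℂ) - (τ.im : ℂ) * I) * (∑ i, (θ i) ^ 2 * fσ i p.2 * f i p.2)
          + ∑ i, deriv (fσ i) p.2 * deriv (f i) p.2)
        / (4 * (τ.im : ℂ) ^ 2) := by
  intro p
  have hE : ∀ (c : ℂ) (x : ℝ), HasDerivAt (fun s : ℝ => Complex.exp (c * (s : ℂ)))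
      (c * Complex.exp (c * (x : ℂ))) x := by
    intro c x
    have h1 : HasDerivAt (fun s : ℝ => c * (s : ℂ)) (c * 1) x :=
      (Complex.ofRealCLM.hasDerivAt (x := x)).const_mul c
    have h2 := h1.cexp
    convert h2 using 1
    ring
  have hxσ : ∀ i, px (fun q => fσ i q.2 * Complex.exp (-(I * θ i * (q.1 : ℂ)))) p
      = fσ i p.2 * (-(I * θ i) * Complex.exp (-(I * θ i * (p.1 : ℂ)))) := by
    intro i
    have h := ((hE (-(I * θ i)) p.1).const_mul (fσ i p.2)).deriv
    simp only [neg_mul] at h ⊢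
    exact h
  have hx : ∀ i, px (fun q => Complex.exp (I * θ i * (q.1 : ℂ)) * f i q.2) p
      = I * θ i * Complex.exp (I * θ i * (p.1 : ℂ)) * f i p.2 := by
    intro i
    exact ((hE (I * θ i) p.1).mul_const (f i p.2)).deriv
  have hyσ : ∀ i, py (fun q => fσ i q.2 * Complex.exp (-(I * θ i * (q.1 : ℂ)))) p
      = deriv (fσ i) p.2 * Complex.exp (-(I * θ i * (p.1 : ℂ))) := by
    intro i
    exact ((((hfσ i).differentiable (by norm_num)) p.2).hasDerivAt.mul_const
      (Complex.exp (-(I * θ i * (p.1 : ℂ))))).deriv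
  have hy : ∀ i, py (fun q => Complex.exp (I * θ i * (q.1 : ℂ)) * f i q.2) p
      = Complex.exp (I * θ i * (p.1 : ℂ)) * deriv (f i) p.2 := by
    intro i
    exact ((((hf i).differentiable (by norm_num)) p.2).hasDerivAt.const_mul
      (Complex.exp (I * θ i * (p.1 : ℂ)))).deriv
  have ht : (τ.im : ℂ) ≠ 0 := by exact_mod_cast hτ
  have hτe : τ = (τ.re : ℂ) + (τ.im : ℂ) * I := (Complex.re_add_im τ).symm
  simp only [Dz, Dw, hxσ, hx, hyσ, hy]
  generalize hb : (τ.re : ℂ) - (τ.im : ℂ) * I = τb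
  have hd : τ - τb = 2 * I * (τ.im : ℂ) := by
    rw [← hb]; linear_combination hτe
  have hd' : τb - τ = -(2 * I * (τ.im : ℂ)) := by
    rw [← hd]; ring
  have hs : τ + τb = 2 * (τ.re : ℂ) := by
    rw [← hb]; linear_combination hτe
  rw [hd, hd']
  generalize (τ.re : ℂ) = a at *
  generalize (τ.im : ℂ) = t at *
  simp only [Finset.mul_sum, ← Finset.sum_add_distrib, ← Finset.sum_neg_distrib, Finset.sum_div]
  refine Finset.sum_congr rfl fun i _ => ?_
  have hEE : Complex.exp (-(I * θ i * (p.1 : ℂ))) * Complex.exp (I * θ i * (p.1 : ℂ)) = 1 := by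
    rw [← Complex.exp_add]; simp
  generalize Complex.exp (-(I * θ i * (p.1 : ℂ))) = E' at *
  generalize Complex.exp (I * θ i * (p.1 : ℂ)) = E at *
  generalize deriv (f i) p.2 = df
  generalize deriv (fσ i) p.2 = dg
  generalize f i p.2 = F
  generalize fσ i p.2 = G
  generalize θ i = k
  have hI : I * I = -1 := Complex.I_mul_I
  have hden : ∀ A B C D : ℂ, A / -(2 * I * t) * (B / (2 * I * t)) + C / (2 * I * t) * (D / -(2 * I * t))
      = (A * B + C * D) / (4 * t ^ 2) := by
    intro A B C D
    have e : -(2 * I * t) * (2 * I * t) = 4 * t ^ 2 := by linear_combination (-4 * t ^ 2) * hI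
    rw [div_mul_div_comm, div_mul_div_comm, mul_comm (2 * I * t) (-(2 * I * t)), e, add_div]
  rw [hden, ← mul_div_assoc]
  congr 1
  have key : (τb * (G * (-(I * k) * E')) - dg * E') * (τ * (I * k * E * F) - E * df)
      + (τ * (G * (-(I * k) * E')) - dg * E') * (τb * (I * k * E * F) - E * df)
      = (E' * E) * (2 * τ * τb * (-(I * I)) * k ^ 2 * G * F
        + (τ + τb) * I * k * (G * df - dg * F) + 2 * dg * df) := by ring
  rw [key, hEE, hI, hs]
  ring
end

section
/- Conservation of the current in the generalized Neumann system: let τ ∈ ℂ with τ₁ = Re τ, τ̄ = Re τ − i·Im τ; let θ ∈ ℂ^N, let f, f^σ : ℝ → ℂ^N be twice continuously differentiable and u : ℝ → ℂ, satisfying f̈ᵢ = (ττ̄θᵢ² − u)fᵢ + 2iτ₁θᵢḟᵢ and f̈^σᵢ = (ττ̄θᵢ² − u)f^σᵢ − 2iτ₁θᵢḟ^σᵢ (dots denote d/dy). Then for every z ∈ ℂ with z + θᵢ ≠ 0 for all i, the U(1) current 𝒥(z) = ∑ᵢ (z + θᵢ)⁻¹ [ ½( ḟ^σᵢ fᵢ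 − f^σᵢ ḟᵢ ) + iτ₁ θᵢ f^σᵢ fᵢ ] is conserved: d𝒥(z)/dy = 0 for all y. -/
open Complex

/-- conservation of the `U(1)` current in the generalized Neumann
system.  If `f, f^σ` solve the generalized Neumann equations, then for every
`z` with `z + θᵢ ≠ 0` for all `i`, the current
`𝒥(z) = ∑ᵢ (z+θᵢ)⁻¹ [½(ḟ^σᵢ fᵢ − f^σᵢ ḟᵢ) + iτ₁θᵢ f^σᵢ fᵢ]` is conserved in `y`. -/
theorem neumann_current_conserved (N : ℕ) (τ : ℂ) (θ : Fin N → ℂ)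
    (f fσ : Fin N → ℝ → ℂ) (u : ℝ → ℂ)
    (hf : ∀ i, ContDiff ℝ 2 (f i)) (hfσ : ∀ i, ContDiff ℝ 2 (fσ i))
    (heqf : ∀ i y, deriv (deriv (f i)) y
      = (τ * ((τ.re : ℂ) - (τ.im : ℂ) * I) * (θ i) ^ 2 - u y) * f i y
        + 2 * I * (τ.re : ℂ) * θ i * deriv (f i) y)
    (heqfσ : ∀ i y, deriv (deriv (fσ i)) y
      = (τ * ((τ.re : ℂ) - (τ.im : ℂ) * I) * (θ i) ^ 2 - u y) * fσ i y
        - 2 * I * (τ.re : ℂ) * θ i * deriv (fσ i) y) :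
    ∀ z : ℂ, (∀ i, z + θ i ≠ 0) → ∀ y : ℝ,
      deriv (fun s => ∑ i, (z + θ i)⁻¹ *
        ((1/2) * (deriv (fσ i) s * f i s - fσ i s * deriv (f i) s)
          + I * (τ.re : ℂ) * θ i * fσ i s * f i s)) y = 0 := by
  intro z _ y
  have d1 : ∀ g : ℝ → ℂ, ContDiff ℝ 2 g → HasDerivAt g (deriv g y) y := fun g hg =>
    ((hg.differentiable (by norm_num)) y).hasDerivAt
  have d2 : ∀ g : ℝ → ℂ, ContDiff ℝ 2 g →
      HasDerivAt (deriv g) (deriv (deriv g) y) y := fun g hg => by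
    have h : ContDiff ℝ (1 + 1) g := by
      have e : (1 + 1 : WithTop ℕ∞) = 2 := by norm_num
      rw [e]; exact hg
    exact (((contDiff_succ_iff_deriv.1 h).2.2.differentiable (by norm_num)) y).hasDerivAt
  have key : ∀ i ∈ Finset.univ, HasDerivAt (fun s => (z + θ i)⁻¹ *
        ((1/2) * (deriv (fσ i) s * f i s - fσ i s * deriv (f i) s)
          + I * (τ.re : ℂ) * θ i * fσ i s * f i s)) 0 y := by
    intro i _
    have a := d1 _ (hf i)
    have b := d1 _ (hfσ i)
    have a2 := d2 _ (hf i)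
    have b2 := d2 _ (hfσ i)
    have h := ((((b2.mul a).sub (b.mul a2)).const_mul (1/2 : ℂ)).add
      ((b.const_mul (I * (τ.re : ℂ) * θ i)).mul a)).const_mul (z + θ i)⁻¹
    refine HasDerivAt.congr_deriv h ?_
    rw [heqf, heqfσ]
    ring
  have := (HasDerivAt.fun_sum key).deriv
  simpa using this
end
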